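/- Let E be a finite-dimensional real inner product space, g : E → ℝ a convex differentiable function, and C = {x ∈ E : g(x) ≤ 0}. Suppose there exists x₀ with g(x₀) < 0 (Slater condition), and let x ∈ E satisfy g(x) = 0 with gradient ∇g(x) ≠ 0. Then the normal cone to C at x, N_C(x) = {z ∈ E : ⟨z, y − x⟩ ≤ 0 for all y ∈ C}, equals the ray {λ·∇g(x) : λ ≥ 0}. -/

import Mathlib

/-!
Write `v = ∇g(x)`. The difference quotients of `g` along a ray from `x` tend to `⟪v, d⟫`
(`tendsto_ray_slope`), which gives two facts. Convexity yields the gradient inequality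
`⟪v, y - x⟫ ≤ g y`, so every nonnegative multiple of `v` is normal to `C`. Conversely, any `d` with
`⟪v, d⟫ < 0` points into `C`, so a normal vector `z` satisfies `⟪z, d⟫ ≤ 0` for all such `d`; testing
this with `d = -v` and with small perturbations of the component of `z` orthogonal to `v` forces
`z` to be a nonnegative multiple of `v` (`eq_smul_of_inner_nonpos`).
-/

open scoped RealInnerProductSpace

open Filter Topology in
theorem tendsto_ray_slope
    {E : Type*} [NormedAddCommGroup E] [InnerProductSpace ℝ E] [CompleteSpace E]
    {g : E → ℝ} {x : E} (hdiff : DifferentiableAt ℝ g x) (hx : g x = 0) (d : E) :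
    Tendsto (fun t : ℝ => t⁻¹ * g (x + t • d)) (𝓝[>] 0) (𝓝 ⟪gradient g x, d⟫) := by
  have h := (hdiff.hasGradientAt.hasFDerivAt.hasLineDerivAt d).tendsto_slope_zero_right
  simpa [hx] using h

/-- A half-space form of Farkas' lemma for a single vector, with the strict inequality
`⟪v, d⟫ < 0` in the hypothesis. -/
theorem eq_smul_of_inner_nonpos
    {E : Type*} [NormedAddCommGroup E] [InnerProductSpace ℝ E] {v z : E} (hv : v ≠ 0)
    (h : ∀ d : E, ⟪v, d⟫ < 0 → ⟪z, d⟫ ≤ 0) : ∃ l : ℝ, 0 ≤ l ∧ z = l • v := by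
  have hvv : 0 < ⟪v, v⟫ := real_inner_self_pos.mpr hv
  have hc : 0 ≤ ⟪z, v⟫ := by
    have := h (-v) (by simpa [inner_neg_right] using hvv)
    simpa [inner_neg_right] using this
  obtain ⟨a, ha⟩ : ∃ a : ℝ, a = ⟪z, v⟫ / ⟪v, v⟫ := ⟨_, rfl⟩
  obtain ⟨w, hw⟩ : ∃ w : E, w = z - a • v := ⟨_, rfl⟩
  have hz : z = a • v + w := by rw [hw]; abel
  have hvw : ⟪v, w⟫ = 0 := by
    rw [hw, inner_sub_right, real_inner_smul_right, ha, div_mul_cancel₀ _ hvv.ne',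
      real_inner_comm, sub_self]
  have hzw : ⟪z, w⟫ = ⟪w, w⟫ := by
    rw [hz, inner_add_left, real_inner_smul_left, hvw]; ring
  have key : ∀ ε : ℝ, 0 < ε → ⟪w, w⟫ ≤ ε * ⟪z, v⟫ := by
    intro ε hε
    have := h (w - ε • v) (by
      rw [inner_sub_right, real_inner_smul_right, hvw]
      nlinarith [mul_pos hε hvv])
    rw [inner_sub_right, real_inner_smul_right, hzw] at this
    linarith
  have hw0 : w = 0 := by
    by_contra hne
    have hww : 0 < ⟪w, w⟫ := real_inner_self_pos.mpr hne
    -- this `ε` makes `ε * ⟪z, v⟫ < ⟪w, w⟫`, also when `⟪z, v⟫ = 0`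
    have h1 := key (⟪w, w⟫ / (⟪z, v⟫ + 1)) (by positivity)
    rw [div_mul_eq_mul_div, le_div_iff₀ (by linarith)] at h1
    nlinarith
  exact ⟨a, ha ▸ div_nonneg hc hvv.le, by rw [hw0, add_zero] at hz; exact hz⟩

/-- Let `E` be a finite-dimensional real inner product space, `g : E → ℝ` a
convex differentiable function and `C = {x : g x ≤ 0}`.  Suppose the Slater condition holds
(`g x₀ < 0` for some `x₀`), and let `x` satisfy `g x = 0` with gradient `∇g(x) ≠ 0`.  Then the
normal cone to `C` at `x`, `N_C(x) = {z : ⟪z, y - x⟫ ≤ 0 for all y ∈ C}`, equals the ray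
`{λ • ∇g(x) : λ ≥ 0}` generated by the gradient of the constraint function. -/
theorem normalCone_of_sublevel_eq_gradient_ray
    {E : Type*} [NormedAddCommGroup E] [InnerProductSpace ℝ E] [FiniteDimensional ℝ E]
    (g : E → ℝ) (hconv : ConvexOn ℝ Set.univ g) (hdiff : Differentiable ℝ g)
    (x₀ : E) (hslater : g x₀ < 0)
    (x : E) (hx : g x = 0) (hgrad : gradient g x ≠ 0) :
    {z : E | ∀ y : E, g y ≤ 0 → ⟪z, y - x⟫ ≤ 0}
      = {z : E | ∃ l : ℝ, 0 ≤ l ∧ z = l • gradient g x} := by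
  have := FiniteDimensional.complete ℝ E
  ext z
  constructor
  · intro hz
    refine eq_smul_of_inner_nonpos hgrad fun d hd => ?_
    -- `g` is negative at `x + t • d` for small `t > 0`, so this point lies in `C`
    obtain ⟨t, ht, ht0⟩ := (((tendsto_ray_slope (hdiff x) hx d).eventually_lt_const hd).and
      self_mem_nhdsWithin).exists
    have ht0 : 0 < t := ht0
    have hg : g (x + t • d) ≤ 0 := by
      by_contra! hpos
      exact absurd ht (not_lt.mpr (by positivity))
    have h1 := hz _ hg
    rw [add_sub_cancel_left, real_inner_smul_right] at h1
    exact nonpos_of_mul_nonpos_right h1 ht0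
  · rintro ⟨l, hl, rfl⟩ y hy
    have hgi : ⟪gradient g x, y - x⟫ ≤ g y := by
      refine le_of_tendsto (tendsto_ray_slope (hdiff x) hx (y - x)) ?_
      filter_upwards [Ioo_mem_nhdsGT (zero_lt_one' ℝ)] with t ht
      have h1 := hconv.2 (Set.mem_univ x) (Set.mem_univ y) (sub_nonneg.mpr ht.2.le) ht.1.le
        (by ring)
      have h2 : (1 - t) • x + t • y = x + t • (y - x) := by module
      rw [h2, hx, smul_zero, zero_add, smul_eq_mul] at h1
      rwa [inv_mul_le_iff₀ ht.1]
    rw [real_inner_smul_left]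
    exact mul_nonpos_of_nonneg_of_nonpos hl (hgi.trans hy)
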